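/- Let α ∈ (0,1) be irrational and j > 0, and write r_{k_j} = Σ_{h=2}^N c_h q_h in its Ostrowski representation (so c_0 = c_1 = 0). Then k_j = Σ_{h=2}^N c_h p_h and j = Σ_{h=2}^N c_h (q_h − a_1 p_h). -/

import Mathlib

open Filter Finset

noncomputable section

/-- The Gauss map `G(x) = {1/x}` (with `G(0) = 0`, since `0⁻¹ = 0` in Lean). -/
def gaussMap (x : ℝ) : ℝ := Int.fract x⁻¹

/-- `α_m = G^m(α)`. -/
def gaussIter (α : ℝ) (m : ℕ) : ℝ := gaussMap^[m] α

/-- The `h`-th partial quotient `a_h` of `α` (meaningful for `h ≥ 1`):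
`a_h = ⌊(G^{h-1} α)⁻¹⌋`. -/
def pq (α : ℝ) (h : ℕ) : ℕ := ⌊(gaussIter α (h - 1))⁻¹⌋₊

/-- Denominators `q_n` of the convergents of `α`:
`q_0 = 1`, `q_1 = a_1`, `q_{n+2} = a_{n+2} q_{n+1} + q_n`. -/
def qden (α : ℝ) : ℕ → ℕ
  | 0 => 1
  | 1 => pq α 1
  | (n + 2) => pq α (n + 2) * qden α (n + 1) + qden α n

/-- Numerators `p_n` of the convergents of `α`:
`p_0 = 0`, `p_1 = 1`, `p_{n+2} = a_{n+2} p_{n+1} + p_n`. -/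
def pnum (α : ℝ) : ℕ → ℕ
  | 0 => 0
  | 1 => 1
  | (n + 2) => pq α (n + 2) * pnum α (n + 1) + pnum α n

/-- `f_n = (-1)^n (q_n α - p_n)`. -/
def fseq (α : ℝ) (n : ℕ) : ℝ := (-1) ^ n * ((qden α n : ℝ) * α - (pnum α n : ℝ))

/-- `r_k = min {r ≥ 0 : ⌊r α⌋ = k}`. -/
def rmin (α : ℝ) (k : ℕ) : ℕ := sInf {r : ℕ | ⌊(r : ℝ) * α⌋ = (k : ℤ)}

/-- `t_k = #{r ≥ 0 : ⌊r α⌋ = k}`. -/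
def tcount (α : ℝ) (k : ℕ) : ℕ := Set.ncard {r : ℕ | ⌊(r : ℝ) * α⌋ = (k : ℤ)}

/-- `(k_j)_{j ≥ 0}`: the increasing enumeration of `{k : t_k = a_1 + 1}`. -/
def kseq (α : ℝ) (j : ℕ) : ℕ := Nat.nth (fun k => tcount α k = pq α 1 + 1) j

/-- The gaps `g_j = r_{k_j} - r_{k_{j-1}}` (for `j ≥ 1`). -/
def gseq (γ : ℝ) (j : ℕ) : ℕ := rmin γ (kseq γ j) - rmin γ (kseq γ (j - 1))

/-- `(j_h)_{h ≥ 0}`: the increasing enumeration of those `j ≥ 1` with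
`g_j = q_2 + q_1`. -/
def jbig (γ : ℝ) (h : ℕ) : ℕ :=
  Nat.nth (fun j => 1 ≤ j ∧ gseq γ j = qden γ 2 + qden γ 1) h

/-- `ᾱ_1 = G(α)/(1 - G(α))`. -/
def abar (α : ℝ) : ℝ := gaussIter α 1 / (1 - gaussIter α 1)

/-- The Ostrowski representation `r = ∑_{h=0}^N c_h q_h` with `0 ≤ c_h ≤ a_{h+1}`,
`c_{h-1} = 0` whenever `c_h = a_{h+1}`, and `c_N > 0`; `N = ord r`. -/
def IsOstrowski (α : ℝ) (r N : ℕ) (c : ℕ → ℕ) : Prop :=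
  r = ∑ h ∈ Finset.range (N + 1), c h * qden α h ∧
  (∀ h, c h ≤ pq α (h + 1)) ∧
  (∀ h, c (h + 1) = pq α (h + 2) → c h = 0) ∧
  0 < c N ∧ ∀ h, N < h → c h = 0

/-- The order `ord r` of a positive integer `r`. -/
def ordOst (α : ℝ) (r : ℕ) : ℕ := sInf {N | ∃ c, IsOstrowski α r N c}

/-- `s(y) = 2 χ_{[0,1/2)}({y}) - 1`. -/
def sfun (y : ℝ) : ℝ := if Int.fract y < 1 / 2 then 1 else -1

/-- `S_n(α, β) = ∑_{r=0}^n s({r α + β})`. -/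
def Sgen (α β : ℝ) (n : ℕ) : ℝ := ∑ r ∈ Finset.range (n + 1), sfun ((r : ℝ) * α + β)

/-- `S_n(α) = S_n(α, 0)`. -/
def Ssum (α : ℝ) (n : ℕ) : ℝ := Sgen α 0 n

/-- `max_{0 ≤ n ≤ r} S_n(α)`. -/
def maxS (α : ℝ) (r : ℕ) : ℝ := sSup (Ssum α '' Set.Iic r)

/-- `min_{0 ≤ n ≤ r} S_n(α)`. -/
def minS (α : ℝ) (r : ℕ) : ℝ := sInf (Ssum α '' Set.Iic r)

/-- `d_n(α, β) = ∑_{r=0}^{n-1} χ_{[0,β)}({r α}) - β n`. -/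
def ddisc (α β : ℝ) (n : ℕ) : ℝ :=
  (∑ r ∈ Finset.range n, if Int.fract ((r : ℝ) * α) < β then (1 : ℝ) else 0) - β * n

/-- `j(r) = max {j + sgn R₁ - 1, 0}` from the decomposition `r = r_{k_j} + R₁ q₁ + R₀`. -/
def jfun (j R1 : ℕ) : ℕ := if R1 = 0 then j - 1 else j

/-- `i(r) = k_j - j + max {R₁ - 1, 0}` from the decomposition `r = r_{k_j} + R₁ q₁ + R₀`. -/
def ifun (α : ℝ) (j R1 : ℕ) : ℕ := kseq α j - j + (R1 - 1)

/-- `S̃(r)` from the decomposition `r = r_{k_j} + R₁ q₁ + R₀`. -/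
def Stil (α : ℝ) (r R1 R0 : ℕ) : ℝ :=
  if R0 = 0 then (if R1 = 0 then sfun ((r : ℝ) * α) else 0)
  else if R1 = 0 then ∑ i ∈ Finset.Icc (r - R0) r, sfun ((i : ℝ) * α)
  else ∑ i ∈ Finset.Icc (r - R0 + 1) r, sfun ((i : ℝ) * α)

/-- `sup_{β ∈ (0,1)} |d_n(α, β)| = n D_n^*(α)`. -/
def nDsup (α : ℝ) (n : ℕ) : ℝ := sSup ((fun β => |ddisc α β n|) '' Set.Ioo (0 : ℝ) 1)

/-- The discrepancy `D_n^*(α) = sup_{β ∈ (0,1)} |d_n(α, β)| / n`. -/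
def Dstar (α : ℝ) (n : ℕ) : ℝ :=
  sSup ((fun β => |ddisc α β n| / (n : ℝ)) '' Set.Ioo (0 : ℝ) 1)

theorem gi_succ (α : ℝ) (m : ℕ) : gaussIter α (m + 1) = Int.fract (gaussIter α m)⁻¹ := by
  unfold gaussIter
  rw [Function.iterate_succ_apply']
  rfl

theorem gi_props (α : ℝ) (hirr : Irrational α) (h0 : 0 < α) (h1 : α < 1) (m : ℕ) :
    Irrational (gaussIter α m) ∧ 0 < gaussIter α m ∧ gaussIter α m < 1 := by
  induction m with
  | zero => exact ⟨hirr, h0, h1⟩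
  | succ m ih =>
    obtain ⟨hi, hp, hl⟩ := ih
    rw [gi_succ]
    have hi2 : Irrational (Int.fract (gaussIter α m)⁻¹) := by
      unfold Int.fract
      exact hi.inv.sub_intCast _
    refine ⟨hi2, ?_, Int.fract_lt_one _⟩
    exact lt_of_le_of_ne (Int.fract_nonneg _) (fun h => hi2.ne_zero h.symm)

theorem pq_cast (α : ℝ) (hirr : Irrational α) (h0 : 0 < α) (h1 : α < 1) (m : ℕ) :
    (pq α (m + 1) : ℝ) = (gaussIter α m)⁻¹ - gaussIter α (m + 1) := by
  obtain ⟨hi, hp, hl⟩ := gi_props α hirr h0 h1 m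
  rw [gi_succ]
  unfold pq
  simp only [Nat.add_sub_cancel]
  rw [natCast_floor_eq_intCast_floor (inv_nonneg.2 hp.le), Int.fract]
  ring

theorem pq_pos (α : ℝ) (hirr : Irrational α) (h0 : 0 < α) (h1 : α < 1) (m : ℕ) :
    1 ≤ pq α (m + 1) := by
  obtain ⟨hi, hp, hl⟩ := gi_props α hirr h0 h1 m
  unfold pq
  simp only [Nat.add_sub_cancel]
  exact Nat.le_floor (by simpa using (one_le_inv₀ hp).2 hl.le)

theorem qden_pos (α : ℝ) (hirr : Irrational α) (h0 : 0 < α) (h1 : α < 1) (n : ℕ) :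
    0 < qden α n ∧ 0 < qden α (n + 1) := by
  induction n with
  | zero => exact ⟨by simp [qden], pq_pos α hirr h0 h1 0⟩
  | succ n ih =>
    refine ⟨ih.2, ?_⟩
    rw [qden]
    have := ih.1
    positivity

theorem fseq_rec (α : ℝ) (n : ℕ) :
    fseq α (n + 2) = fseq α n - pq α (n + 2) * fseq α (n + 1) := by
  simp only [fseq, qden, pnum]
  push_cast
  ring

theorem fseq_mul (α : ℝ) (hirr : Irrational α) (h0 : 0 < α) (h1 : α < 1) (n : ℕ) :
    0 < fseq α n ∧ fseq α (n + 1) = fseq α n * gaussIter α (n + 1) := by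
  induction n with
  | zero =>
    refine ⟨by simpa [fseq, qden, pnum] using h0, ?_⟩
    have h := pq_cast α hirr h0 h1 0
    simp only [zero_add] at h
    have h2 : gaussIter α 0 = α := rfl
    rw [h2] at h
    simp only [zero_add, fseq, qden, pnum, h]
    push_cast
    field_simp
    ring
  | succ n ih =>
    obtain ⟨hp, hm⟩ := ih
    obtain ⟨hi, hgp, hl⟩ := gi_props α hirr h0 h1 (n + 1)
    refine ⟨by rw [hm]; positivity, ?_⟩
    rw [fseq_rec, pq_cast α hirr h0 h1 (n + 1), hm]
    field_simp
    ring

theorem fseq_pos (α : ℝ) (hirr : Irrational α) (h0 : 0 < α) (h1 : α < 1) (n : ℕ) :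
    0 < fseq α n := (fseq_mul α hirr h0 h1 n).1

/-- Two-sided bounds for the partial sums of `c_h (q_h α - p_h)`. -/
theorem delta_bounds (α : ℝ) (hirr : Irrational α) (h0 : 0 < α) (h1 : α < 1)
    (c : ℕ → ℕ) (hc : ∀ h, c h ≤ pq α (h + 1)) (M : ℕ) :
    let δ := ∑ h ∈ Finset.range (2 * M), (c (h + 2) : ℝ) *
      ((qden α (h + 2) : ℝ) * α - pnum α (h + 2))
    δ ≤ fseq α 1 - fseq α (2 * M + 1) ∧ -(fseq α 2 - fseq α (2 * M + 2)) ≤ δ := by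
  induction M with
  | zero => simp
  | succ M ih =>
    simp only at ih ⊢
    rw [show 2 * (M + 1) = 2 * M + 1 + 1 by ring, Finset.sum_range_succ, Finset.sum_range_succ]
    have e1 : (qden α (2 * M + 2) : ℝ) * α - pnum α (2 * M + 2) = fseq α (2 * M + 2) := by
      simp [fseq, pow_add, pow_mul]
    have e2 : (qden α (2 * M + 1 + 2) : ℝ) * α - pnum α (2 * M + 1 + 2)
        = - fseq α (2 * M + 3) := by
      simp [fseq, pow_add, pow_mul]
      norm_num
    rw [e1, e2]
    have r1 := fseq_rec α (2 * M + 1)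
    have r2 := fseq_rec α (2 * M + 2)
    have p2 := fseq_pos α hirr h0 h1 (2 * M + 2)
    have p3 := fseq_pos α hirr h0 h1 (2 * M + 3)
    have c2 : (c (2 * M + 2) : ℝ) ≤ pq α (2 * M + 3) := by exact_mod_cast hc (2 * M + 2)
    have c3 : (c (2 * M + 1 + 2) : ℝ) ≤ pq α (2 * M + 4) := by exact_mod_cast hc (2 * M + 3)
    have m2 := mul_le_mul_of_nonneg_right c2 p2.le
    have m3 := mul_le_mul_of_nonneg_right c3 p3.le
    have n2 : (0:ℝ) ≤ c (2 * M + 2) * fseq α (2 * M + 2) := by positivity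
    have n3 : (0:ℝ) ≤ c (2 * M + 1 + 2) * fseq α (2 * M + 3) := by positivity
    have r1' : fseq α (2 * M + 1 + 1 + 1) =
      fseq α (2 * M + 1) - pq α (2 * M + 3) * fseq α (2 * M + 2) := r1
    have r2' : fseq α (2 * M + 1 + 1 + 2) =
      fseq α (2 * M + 2) - pq α (2 * M + 4) * fseq α (2 * M + 3) := r2
    constructor <;> linarith [ih.1, ih.2]

theorem floor_set (α : ℝ) (h0 : 0 < α) (k : ℕ) :
    {r : ℕ | ⌊(r : ℝ) * α⌋ = (k : ℤ)} = Set.Ico ⌈(k : ℝ) / α⌉₊ ⌈((k + 1 : ℕ) : ℝ) / α⌉₊ := by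
  ext r
  simp only [Set.mem_setOf_eq, Set.mem_Ico, Int.floor_eq_iff, Nat.ceil_le, Nat.lt_ceil]
  rw [div_le_iff₀ h0, lt_div_iff₀ h0]
  push_cast
  rfl

theorem ceil_steps (α : ℝ) (hirr : Irrational α) (h0 : 0 < α) (h1 : α < 1) (k : ℕ) :
    ⌈(k : ℝ) / α⌉₊ + pq α 1 ≤ ⌈((k + 1 : ℕ) : ℝ) / α⌉₊ ∧
    ⌈((k + 1 : ℕ) : ℝ) / α⌉₊ ≤ ⌈(k : ℝ) / α⌉₊ + (pq α 1 + 1) := by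
  have h := pq_cast α hirr h0 h1 0
  obtain ⟨-, gp, gl⟩ := gi_props α hirr h0 h1 1
  have h2 : gaussIter α 0 = α := rfl
  simp only [zero_add, h2] at h
  have e : ((k + 1 : ℕ) : ℝ) / α = k / α + α⁻¹ := by push_cast; field_simp
  have nn : 0 ≤ (k : ℝ) / α := by positivity
  rw [e]
  constructor
  · rw [← Nat.ceil_add_natCast nn]
    exact Nat.ceil_mono (by linarith)
  · rw [← Nat.ceil_add_natCast nn]
    apply Nat.ceil_mono
    push_cast
    linarith

theorem tcount_eq (α : ℝ) (h0 : 0 < α) (k : ℕ) :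
    tcount α k = ⌈((k + 1 : ℕ) : ℝ) / α⌉₊ - ⌈(k : ℝ) / α⌉₊ := by
  unfold tcount
  rw [floor_set α h0, ← Finset.coe_Ico, Set.ncard_coe_finset, Nat.card_Ico]

theorem rmin_eq (α : ℝ) (hirr : Irrational α) (h0 : 0 < α) (h1 : α < 1) (k : ℕ) :
    rmin α k = ⌈(k : ℝ) / α⌉₊ := by
  unfold rmin
  rw [floor_set α h0]
  have := (ceil_steps α hirr h0 h1 k).1
  have hp := pq_pos α hirr h0 h1 0
  simp only [zero_add] at hp
  exact csInf_Ico (by omega)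

open Classical in
theorem ceil_count (α : ℝ) (hirr : Irrational α) (h0 : 0 < α) (h1 : α < 1) (k : ℕ) :
    ⌈(k : ℝ) / α⌉₊ = pq α 1 * k + Nat.count (fun k => tcount α k = pq α 1 + 1) k := by
  induction k with
  | zero => simp
  | succ k ih =>
    have hs := ceil_steps α hirr h0 h1 k
    have ht := tcount_eq α h0 k
    rw [Nat.count_succ, mul_add, mul_one]
    split_ifs with hif <;> omega

/-- if `r_{k_j} = ∑_{h=2}^N c_h q_h` is the Ostrowski representation
(so `c_0 = c_1 = 0`), then `k_j = ∑_{h=2}^N c_h p_h` and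
`j = ∑_{h=2}^N c_h (q_h - a_1 p_h)`. -/
theorem kj_and_j_formula (α : ℝ) (hirr : Irrational α) (h0 : 0 < α) (h1 : α < 1)
    (j : ℕ) (hj : 0 < j) (N : ℕ) (c : ℕ → ℕ)
    (hOst : IsOstrowski α (rmin α (kseq α j)) N c) (hc0 : c 0 = 0) (hc1 : c 1 = 0) :
    kseq α j = ∑ h ∈ Finset.Icc 2 N, c h * pnum α h ∧
    (j : ℤ) = ∑ h ∈ Finset.Icc 2 N,
      (c h : ℤ) * ((qden α h : ℤ) - (pq α 1 : ℤ) * (pnum α h : ℤ)) := by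
  classical
  obtain ⟨hr, hle, -, hN, -⟩ := hOst
  set k := kseq α j with hk
  have hrpos : 0 < rmin α k := by
    rw [hr]
    refine lt_of_lt_of_le (Nat.mul_pos hN (qden_pos α hirr h0 h1 N).1) ?_
    exact Finset.single_le_sum (f := fun h => c h * qden α h) (fun _ _ => Nat.zero_le _)
      (Finset.mem_range.2 (Nat.lt_succ_self N))
  have hk0 : k ≠ 0 := by
    intro h
    rw [rmin_eq α hirr h0 h1, h] at hrpos
    simp at hrpos
  have hfin : ∀ hf : (setOf (fun k => tcount α k = pq α 1 + 1)).Finite, j < hf.toFinset.card := by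
    intro hf
    by_contra hcon
    exact hk0 (Nat.nth_of_card_le hf (not_lt.1 hcon))
  have hmem : tcount α k = pq α 1 + 1 :=
    Nat.nth_mem (p := fun k => tcount α k = pq α 1 + 1) j hfin
  have hcount : Nat.count (fun k => tcount α k = pq α 1 + 1) k = j :=
    Nat.count_nth hfin
  have hrk := ceil_count α hirr h0 h1 k
  rw [hcount, ← rmin_eq α hirr h0 h1] at hrk
  have hsum : ∀ f : ℕ → ℝ, ∑ h ∈ Finset.Icc 2 N, (c h : ℝ) * f h
      = ∑ h ∈ Finset.range (N + 1), (c h : ℝ) * f h := by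
    intro f
    apply Finset.sum_subset
    · intro x hx
      simp only [Finset.mem_Icc, Finset.mem_range] at *
      omega
    · intro x hx hx2
      simp only [Finset.mem_Icc, Finset.mem_range] at *
      have : x = 0 ∨ x = 1 := by omega
      rcases this with rfl | rfl <;> simp [hc0, hc1]
  have hrR : (rmin α k : ℝ) = ∑ h ∈ Finset.Icc 2 N, (c h : ℝ) * qden α h := by
    rw [hsum (fun h => (qden α h : ℝ)), hr]
    push_cast
    rfl
  -- the truncated sequence, extended by zero
  set c' : ℕ → ℕ := fun h => if h ≤ N then c h else 0 with hc'
  have hb := delta_bounds α hirr h0 h1 c' (by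
    intro h
    simp only [hc']
    split_ifs
    · exact hle h
    · exact Nat.zero_le _) (N + 1)
  have hδ : ∑ h ∈ Finset.range (2 * (N + 1)), (c' (h + 2) : ℝ) *
      ((qden α (h + 2) : ℝ) * α - pnum α (h + 2))
      = ∑ h ∈ Finset.Icc 2 N, (c h : ℝ) * ((qden α h : ℝ) * α - pnum α h) := by
    rw [hsum (fun h => (qden α h : ℝ) * α - pnum α h)]
    have e1 : ∑ h ∈ Finset.range (N + 1), (c h : ℝ) * ((qden α h : ℝ) * α - pnum α h)
        = ∑ h ∈ Finset.range (N + 1), (c' h : ℝ) * ((qden α h : ℝ) * α - pnum α h) := by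
      apply Finset.sum_congr rfl
      intro x hx
      have : x ≤ N := by simpa [Nat.lt_succ_iff] using hx
      simp [hc', this]
    have e2 : ∑ h ∈ Finset.range (N + 1), (c' h : ℝ) * ((qden α h : ℝ) * α - pnum α h)
        = ∑ h ∈ Finset.range (2 * (N + 1) + 2),
          (c' h : ℝ) * ((qden α h : ℝ) * α - pnum α h) := by
      apply Finset.sum_subset
      · intro x hx
        simp only [Finset.mem_range] at *
        omega
      · intro x hx hx2
        have : ¬ x ≤ N := by
          simp only [Finset.mem_range] at hx2
          omega
        simp [hc', this]
    rw [e1, e2, Finset.sum_range_succ', Finset.sum_range_succ']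
    have z0 : c' 0 = 0 := by simp [hc', hc0]
    have z1 : c' (0 + 1) = 0 := by simp [hc', hc1]
    rw [z0, z1]
    simp only [Nat.cast_zero, zero_mul, add_zero]
  simp only at hb
  rw [hδ] at hb
  have hsplit : ∑ h ∈ Finset.Icc 2 N, (c h : ℝ) * ((qden α h : ℝ) * α - pnum α h)
      = rmin α k * α - ∑ h ∈ Finset.Icc 2 N, (c h : ℝ) * pnum α h := by
    rw [hrR, Finset.sum_mul, ← Finset.sum_sub_distrib]
    apply Finset.sum_congr rfl
    intro x _
    ring
  rw [hsplit] at hb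
  have hlo : (k : ℝ) ≤ rmin α k * α := by
    rw [rmin_eq α hirr h0 h1, ← div_le_iff₀ h0]
    exact Nat.le_ceil _
  have hhi : ((rmin α k : ℝ) + pq α 1) * α < k + 1 := by
    have ht := tcount_eq α h0 k
    rw [← rmin_eq α hirr h0 h1 k, hmem] at ht
    have h3 : rmin α k + pq α 1 < ⌈((k + 1 : ℕ) : ℝ) / α⌉₊ := by omega
    rw [Nat.lt_ceil, lt_div_iff₀ h0] at h3
    exact_mod_cast h3
  have f1 : fseq α 1 = 1 - pq α 1 * α := by simp [fseq, qden, pnum]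
  have f0 : fseq α 0 = α := by simp [fseq, qden, pnum]
  have f2 := fseq_rec α 0
  simp only [zero_add] at f2
  have a2 : (1 : ℝ) ≤ pq α 2 := by exact_mod_cast pq_pos α hirr h0 h1 1
  have p1 := fseq_pos α hirr h0 h1 1
  have p2 := fseq_pos α hirr h0 h1 2
  have pa := fseq_pos α hirr h0 h1 (2 * (N + 1) + 1)
  have pb := fseq_pos α hirr h0 h1 (2 * (N + 1) + 2)
  have m1 := mul_le_mul_of_nonneg_right a2 p1.le
  have hcast : ∑ h ∈ Finset.Icc 2 N, (c h : ℝ) * pnum α h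
      = ((∑ h ∈ Finset.Icc 2 N, c h * pnum α h : ℕ) : ℝ) := by push_cast; rfl
  rw [hcast] at hb
  have hkey : k = ∑ h ∈ Finset.Icc 2 N, c h * pnum α h := by
    set P := ∑ h ∈ Finset.Icc 2 N, c h * pnum α h
    have u1 : (k : ℝ) < (P + 1 : ℕ) := by push_cast; linarith [hb.1, hb.2]
    have u2 : (P : ℝ) < (k + 1 : ℕ) := by push_cast; linarith [hb.1, hb.2]
    have v1 : k < P + 1 := by exact_mod_cast u1
    have v2 : P < k + 1 := by exact_mod_cast u2
    omega
  refine ⟨hkey, ?_⟩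
  have hrZ : (rmin α k : ℤ) = ∑ h ∈ Finset.Icc 2 N, (c h : ℤ) * qden α h := by
    exact_mod_cast hrR
  have hkZ : (k : ℤ) = ∑ h ∈ Finset.Icc 2 N, (c h : ℤ) * pnum α h := by
    exact_mod_cast hkey
  have hj2 : (j : ℤ) = rmin α k - pq α 1 * k := by
    rw [hrk]
    push_cast
    ring
  rw [hj2, hrZ, hkZ, Finset.mul_sum, ← Finset.sum_sub_distrib]
  apply Finset.sum_congr rfl
  intro x _
  ring
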